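/- Privacy-leakage converse bound (middle/large key regime): under the converse setup, I(X^n; W | Z^n) ≥ Σ_{i=1}^n I(V_i; X_i | Z_i). -/

import Mathlib

open MeasureTheory

noncomputable section

/-- Probability mass `P[X = x]` of a finitely-valued random variable `X` on `(Ω, μ)`. -/
def pmass {Ω : Type*} [MeasurableSpace Ω] (μ : Measure Ω) {α : Type*}
    (X : Ω → α) (x : α) : ℝ :=
  (μ (X ⁻¹' {x})).toReal

/-- Shannon entropy `H(X)` (in nats) of a finitely-valued random variable. -/
def entropyRV {Ω : Type*} [MeasurableSpace Ω] (μ : Measure Ω) {α : Type*} [Fintype α]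
    (X : Ω → α) : ℝ :=
  ∑ x : α, Real.negMulLog (pmass μ X x)

/-- Conditional Shannon entropy `H(X | Y)`. -/
def condEntropyRV {Ω : Type*} [MeasurableSpace Ω] (μ : Measure Ω) {α β : Type*}
    [Fintype α] [Fintype β] (X : Ω → α) (Y : Ω → β) : ℝ :=
  entropyRV μ (fun ω => (X ω, Y ω)) - entropyRV μ Y

/-- Mutual information `I(X;Y)`. -/
def mutualInfoRV {Ω : Type*} [MeasurableSpace Ω] (μ : Measure Ω) {α β : Type*}
    [Fintype α] [Fintype β] (X : Ω → α) (Y : Ω → β) : ℝ :=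
  entropyRV μ X + entropyRV μ Y - entropyRV μ (fun ω => (X ω, Y ω))

/-- Conditional mutual information `I(X;Y|Z)`. -/
def condMutualInfoRV {Ω : Type*} [MeasurableSpace Ω] (μ : Measure Ω) {α β γ : Type*}
    [Fintype α] [Fintype β] [Fintype γ] (X : Ω → α) (Y : Ω → β) (Z : Ω → γ) : ℝ :=
  entropyRV μ (fun ω => (X ω, Z ω)) + entropyRV μ (fun ω => (Y ω, Z ω))
    - entropyRV μ Z - entropyRV μ (fun ω => (X ω, Y ω, Z ω))

/-- Expected value `E[f(X)]` of a function of a finitely-valued random variable. -/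
def expVal {Ω : Type*} [MeasurableSpace Ω] (μ : Measure Ω) {α : Type*} [Fintype α]
    (X : Ω → α) (f : α → ℝ) : ℝ :=
  ∑ a : α, pmass μ X a * f a

/-- Independence of two finitely-valued random variables, via their joint mass. -/
def IndepRV {Ω : Type*} [MeasurableSpace Ω] (μ : Measure Ω) {α β : Type*}
    (X : Ω → α) (Y : Ω → β) : Prop :=
  ∀ a b, pmass μ (fun ω => (X ω, Y ω)) (a, b) = pmass μ X a * pmass μ Y b

/-- Conditional independence of `A` and `C` given `B` (the Markov chain `A − B − C`)
for finitely-valued random variables, via joint masses. -/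
def CondIndepRV {Ω : Type*} [MeasurableSpace Ω] (μ : Measure Ω) {α β γ : Type*}
    (A : Ω → α) (B : Ω → β) (C : Ω → γ) : Prop :=
  ∀ a b c,
    pmass μ (fun ω => (A ω, B ω, C ω)) (a, b, c) * pmass μ B b
      = pmass μ (fun ω => (A ω, B ω)) (a, b) * pmass μ (fun ω => (B ω, C ω)) (b, c)

/-- `X` is uniformly distributed on its (finite) alphabet. -/
def UniformRV {Ω : Type*} [MeasurableSpace Ω] (μ : Measure Ω) {α : Type*} [Fintype α]
    (X : Ω → α) : Prop :=
  ∀ x, pmass μ X x = 1 / (Fintype.card α : ℝ)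

/-- The sequence `S = (S_1, …, S_n)` is i.i.d. with single-letter pmf `p`. -/
def HasIIDLaw {Ω : Type*} [MeasurableSpace Ω] (μ : Measure Ω) {α : Type*} {n : ℕ}
    (S : Ω → Fin n → α) (p : α → ℝ) : Prop :=
  ∀ v : Fin n → α, pmass μ S v = ∏ i, p (v i)

/-- `[a]⁻ = min {a, 0}`. -/
def negPartR (a : ℝ) : ℝ := min a 0

/-!
By the chain rule, taken from the last letter down, `I(Xⁿ; W | Zⁿ)` is the sum over `i` of
`H(X_i | X_{>i}, Zⁿ) - H(X_i | X_{>i}, W, Zⁿ)`. The first entropy is `H(X_i | Z_i)` because the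
letters are independent. For the second, `Y_{>i}` is generated from `(X, Z)_{>i}` independently of
`X_i`, `Z_{≤i}` and `(X̃ⁿ, K)`, hence of `W`, so `Y_{>i}` can be added to the condition for free;
dropping `X_{>i}` and `Z_{>i}` afterwards only increases the entropy, to `H(X_i | V_i, Z_i)`.
-/

section Mass

variable {Ω : Type*} [MeasurableSpace Ω] {μ : Measure Ω} {α α' β τ : Type*}

lemma pmass_nonneg (A : Ω → α) (a : α) : 0 ≤ pmass μ A a :=
  ENNReal.toReal_nonneg

lemma pmass_congr {A : Ω → α} {B : Ω → β} {a : α} {b : β} (h : ∀ ω, A ω = a ↔ B ω = b) :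
    pmass μ A a = pmass μ B b :=
  congrArg μ.real (Set.ext h)

lemma pmass_eq_zero_of_forall_ne {A : Ω → α} {a : α} (h : ∀ ω, A ω ≠ a) : pmass μ A a = 0 := by
  rw [pmass, Set.preimage_singleton_eq_empty.2 fun ⟨ω, hω⟩ => h ω hω, measure_empty,
    ENNReal.toReal_zero]

variable [IsFiniteMeasure μ]

lemma pmass_le_pmass_comp (T : Ω → τ) (f : τ → α) (t : τ) :
    pmass μ T t ≤ pmass μ (fun ω => f (T ω)) (f t) :=
  measureReal_mono fun _ hω => congrArg f hω

lemma sum_pmass_eq_measureReal_preimage [MeasurableSpace τ] [MeasurableSingletonClass τ]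
    {T : Ω → τ} (hT : Measurable T) (s : Finset τ) :
    ∑ t ∈ s, pmass μ T t = μ.real (T ⁻¹' s) :=
  sum_measureReal_preimage_singleton s fun t _ => hT (measurableSet_singleton t)

lemma sum_pmass_eq_measureReal_univ [Fintype τ] [MeasurableSpace τ] [MeasurableSingletonClass τ]
    {T : Ω → τ} (hT : Measurable T) : ∑ t, pmass μ T t = μ.real Set.univ := by
  rw [sum_pmass_eq_measureReal_preimage hT, Finset.coe_univ, Set.preimage_univ]

lemma pmass_comp [Fintype τ] [MeasurableSpace τ] [MeasurableSingletonClass τ] [DecidableEq α]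
    {T : Ω → τ} (hT : Measurable T) (f : τ → α) (a : α) :
    pmass μ (fun ω => f (T ω)) a = ∑ t with f t = a, pmass μ T t := by
  rw [sum_pmass_eq_measureReal_preimage hT]
  exact congrArg μ.real (Set.ext fun ω => by simp)

variable [Fintype α] [MeasurableSpace α] [MeasurableSingletonClass α]
  [MeasurableSpace β] [MeasurableSingletonClass β] {A : Ω → α} {B : Ω → β}

lemma pmass_comp_prodMk [DecidableEq α'] (hA : Measurable A) (hB : Measurable B)
    (f : α → α') (a' : α') (b : β) :
    pmass μ (fun ω => (f (A ω), B ω)) (a', b)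
      = ∑ a with f a = a', pmass μ (fun ω => (A ω, B ω)) (a, b) := by
  have h := sum_pmass_eq_measureReal_preimage (μ := μ) (hA.prodMk hB)
    (({a | f a = a'} : Finset α) ×ˢ {b})
  simp only [Finset.sum_product, Finset.sum_singleton] at h
  rw [h]
  exact congrArg μ.real (Set.ext fun ω => by simp [eq_comm])

lemma sum_pmass_prodMk (hA : Measurable A) (hB : Measurable B) (b : β) :
    ∑ a, pmass μ (fun ω => (A ω, B ω)) (a, b) = pmass μ B b := by
  have h := pmass_comp_prodMk (μ := μ) hA hB (fun _ => ()) () b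
  rw [Finset.filter_true_of_mem fun _ _ => rfl] at h
  rw [← h]
  exact pmass_congr fun ω => by simp only [Prod.mk.injEq, true_and]

end Mass

section Entropy

variable {Ω : Type*} [MeasurableSpace Ω] {μ : Measure Ω} {α β γ τ : Type*}

lemma exists_apply_eq_of_negMulLog_pmass_ne_zero {A : Ω → α} {a : α}
    (h : Real.negMulLog (pmass μ A a) ≠ 0) : ∃ ω, A ω = a := by
  by_contra! hne
  exact h (by rw [pmass_eq_zero_of_forall_ne hne, Real.negMulLog_zero])

lemma entropyRV_congr [Fintype α] [Fintype β] {A : Ω → α} {B : Ω → β}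
    (h : ∀ ω ω', A ω = A ω' ↔ B ω = B ω') : entropyRV μ A = entropyRV μ B := by
  have hmass (ω : Ω) : pmass μ A (A ω) = pmass μ B (B ω) := pmass_congr fun ω' => h ω' ω
  choose sample hsample using fun (a : α) (ha : Real.negMulLog (pmass μ A a) ≠ 0) =>
    exists_apply_eq_of_negMulLog_pmass_ne_zero ha
  refine Finset.sum_bij_ne_zero (fun a _ ha => B (sample a ha)) (fun _ _ _ => Finset.mem_univ _)
    (fun a _ ha a' _ ha' haa' => ?_) (fun b _ hb => ?_) (fun a _ ha => ?_)
  · rw [← hsample a ha, ← hsample a' ha', h, haa']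
  · obtain ⟨ω, rfl⟩ := exists_apply_eq_of_negMulLog_pmass_ne_zero hb
    rw [← hmass] at hb
    exact ⟨A ω, Finset.mem_univ _, hb, (h _ _).1 (hsample _ hb)⟩
  · rw [← hmass, hsample a ha]

lemma entropyRV_eq_expVal [Fintype α] (A : Ω → α) :
    entropyRV μ A = expVal μ A fun a => -Real.log (pmass μ A a) :=
  Finset.sum_congr rfl fun a _ => by rw [Real.negMulLog, neg_mul_comm]

lemma condEntropyRV_congr_right [Fintype α] [Fintype β] [Fintype γ] (A : Ω → α) {B : Ω → β}
    {C : Ω → γ} (h : ∀ ω ω', B ω = B ω' ↔ C ω = C ω') :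
    condEntropyRV μ A B = condEntropyRV μ A C := by
  have hpair : entropyRV μ (fun ω => (A ω, B ω)) = entropyRV μ (fun ω => (A ω, C ω)) :=
    entropyRV_congr fun ω ω' => by simp only [Prod.mk.injEq, h]
  rw [condEntropyRV, condEntropyRV, hpair, entropyRV_congr h]

lemma condMutualInfoRV_eq_condEntropyRV_sub [Fintype α] [Fintype β] [Fintype γ]
    (A : Ω → α) (B : Ω → β) (C : Ω → γ) :
    condMutualInfoRV μ A B C
      = condEntropyRV μ A C - condEntropyRV μ A (fun ω => (B ω, C ω)) := by
  rw [condMutualInfoRV, condEntropyRV, condEntropyRV]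
  ring

lemma condMutualInfoRV_comm [Fintype α] [Fintype β] [Fintype γ]
    (A : Ω → α) (B : Ω → β) (C : Ω → γ) :
    condMutualInfoRV μ A B C = condMutualInfoRV μ B A C := by
  have hswap : entropyRV μ (fun ω => (A ω, B ω, C ω)) = entropyRV μ (fun ω => (B ω, A ω, C ω)) :=
    entropyRV_congr fun ω ω' => by simp only [Prod.mk.injEq, and_left_comm]
  rw [condMutualInfoRV, condMutualInfoRV, hswap]
  ring

lemma condEntropyRV_pi_eq_sum [Fintype α] [Fintype β] {n : ℕ} (A : Ω → Fin n → α) (B : Ω → β) :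
    condEntropyRV μ A B
      = ∑ i, condEntropyRV μ (fun ω => A ω i)
          (fun ω => ((fun j : {j // i < j} => A ω j), B ω)) := by
  let tailEntropy (m : ℕ) : ℝ :=
    entropyRV μ fun ω => ((fun j : {j : Fin n // m ≤ j.1} => A ω j), B ω)
  have hterm (i : Fin n) : condEntropyRV μ (fun ω => A ω i)
      (fun ω => ((fun j : {j // i < j} => A ω j), B ω))
        = tailEntropy i - tailEntropy (i + 1) := by
    refine congrArg₂ (· - ·) (entropyRV_congr fun ω ω' => ?_) (entropyRV_congr fun ω ω' => ?_)
    · simp only [Prod.mk.injEq, funext_iff, Subtype.forall]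
      grind
    · simp only [Prod.mk.injEq, funext_iff, Subtype.forall, Fin.lt_def, Nat.succ_le_iff]
  have hfull : entropyRV μ (fun ω => (A ω, B ω)) = tailEntropy 0 :=
    entropyRV_congr fun ω ω' => by simp [funext_iff]
  have hempty : entropyRV μ B = tailEntropy n :=
    entropyRV_congr fun ω ω' => by simp [funext_iff, Fin.is_lt]
  rw [Finset.sum_congr rfl fun i _ => hterm i, condEntropyRV, hfull, hempty,
    Fin.sum_univ_eq_sum_range (fun m => tailEntropy m - tailEntropy (m + 1)),
    Finset.sum_range_sub']

variable [IsFiniteMeasure μ] [Fintype τ] [MeasurableSpace τ] [MeasurableSingletonClass τ]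

lemma expVal_comp [Fintype α] {T : Ω → τ} (hT : Measurable T) (f : τ → α) (g : α → ℝ) :
    expVal μ (fun ω => f (T ω)) g = expVal μ T fun t => g (f t) := by
  classical
  calc expVal μ (fun ω => f (T ω)) g
      = ∑ a, ∑ t with f t = a, pmass μ T t * g (f t) := by
        refine Finset.sum_congr rfl fun a _ => ?_
        rw [pmass_comp hT, Finset.sum_mul]
        exact Finset.sum_congr rfl fun t ht => by rw [(Finset.mem_filter.1 ht).2]
    _ = expVal μ T fun t => g (f t) := Finset.sum_fiberwise _ _ _

lemma entropyRV_comp_eq_expVal [Fintype α] {T : Ω → τ} (hT : Measurable T) (f : τ → α) :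
    entropyRV μ (fun ω => f (T ω))
      = expVal μ T fun t => -Real.log (pmass μ (fun ω => f (T ω)) (f t)) := by
  rw [entropyRV_eq_expVal, expVal_comp hT]

end Entropy

lemma sub_mul_div_le_mul_log {p q r s : ℝ} (hp : 0 ≤ p) (hpq : p ≤ q) (hpr : p ≤ r)
    (hps : p ≤ s) :
    p - q * r / s ≤ p * (Real.log p + Real.log s - Real.log q - Real.log r) := by
  rcases hp.eq_or_lt with rfl | hp
  · rw [zero_mul, zero_sub, neg_nonpos]
    positivity
  have hq := hp.trans_le hpq
  have hr := hp.trans_le hpr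
  have hs := hp.trans_le hps
  have hlog : Real.log p + Real.log s - Real.log q - Real.log r
      = -Real.log (q * r / (p * s)) := by
    rw [Real.log_div (by positivity) (by positivity), Real.log_mul hq.ne' hr.ne',
      Real.log_mul hp.ne' hs.ne']
    ring
  calc p - q * r / s = p * -(q * r / (p * s) - 1) := by field_simp; ring
    _ ≤ p * -Real.log (q * r / (p * s)) := by
        gcongr
        exact Real.log_le_sub_one_of_pos (by positivity)
    _ = _ := by rw [hlog]

section CondMutualInfo

variable {Ω : Type*} [MeasurableSpace Ω] {μ : Measure Ω} [IsFiniteMeasure μ] {α β γ : Type*}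
  [Fintype α] [MeasurableSpace α] [MeasurableSingletonClass α]
  [Fintype β] [MeasurableSpace β] [MeasurableSingletonClass β]
  [Fintype γ] [MeasurableSpace γ] [MeasurableSingletonClass γ]
  {A : Ω → α} {B : Ω → β} {C : Ω → γ}

lemma condMutualInfoRV_eq_expVal (hA : Measurable A) (hB : Measurable B) (hC : Measurable C) :
    condMutualInfoRV μ A B C = expVal μ (fun ω => (A ω, B ω, C ω)) fun t =>
      Real.log (pmass μ (fun ω => (A ω, B ω, C ω)) t) + Real.log (pmass μ C t.2.2)
        - Real.log (pmass μ (fun ω => (A ω, C ω)) (t.1, t.2.2))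
        - Real.log (pmass μ (fun ω => (B ω, C ω)) t.2) := by
  have hT : Measurable fun ω => (A ω, B ω, C ω) := hA.prodMk (hB.prodMk hC)
  have hAC := entropyRV_comp_eq_expVal (μ := μ) hT fun t => (t.1, t.2.2)
  have hBC := entropyRV_comp_eq_expVal (μ := μ) hT Prod.snd
  have hC := entropyRV_comp_eq_expVal (μ := μ) hT fun t => t.2.2
  rw [condMutualInfoRV, hAC, hBC, hC, entropyRV_eq_expVal]
  simp only [expVal, ← Finset.sum_add_distrib, ← Finset.sum_sub_distrib]
  exact Finset.sum_congr rfl fun t _ => by ring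

lemma sum_pmass_mul_pmass_div_pmass (hA : Measurable A) (hB : Measurable B) (hC : Measurable C) :
    ∑ t : α × β × γ, pmass μ (fun ω => (A ω, C ω)) (t.1, t.2.2)
        * pmass μ (fun ω => (B ω, C ω)) t.2 / pmass μ C t.2.2 = μ.real Set.univ :=
  calc
    _ = ∑ c, ∑ a, ∑ b, pmass μ (fun ω => (A ω, C ω)) (a, c)
          * pmass μ (fun ω => (B ω, C ω)) (b, c) / pmass μ C c := by
        simp only [Fintype.sum_prod_type]
        exact (Finset.sum_congr rfl fun a _ => Finset.sum_comm).trans Finset.sum_comm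
    _ = ∑ c, pmass μ C c := by
        simp only [← Finset.sum_div, ← Finset.mul_sum, ← Finset.sum_mul, sum_pmass_prodMk hA hC,
          sum_pmass_prodMk hB hC, mul_self_div_self]
    _ = μ.real Set.univ := sum_pmass_eq_measureReal_univ hC

lemma condMutualInfoRV_nonneg (hA : Measurable A) (hB : Measurable B) (hC : Measurable C) :
    0 ≤ condMutualInfoRV μ A B C := by
  let T : Ω → α × β × γ := fun ω => (A ω, B ω, C ω)
  calc
    0 = ∑ t, (pmass μ T t - pmass μ (fun ω => (A ω, C ω)) (t.1, t.2.2)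
          * pmass μ (fun ω => (B ω, C ω)) t.2 / pmass μ C t.2.2) := by
        rw [Finset.sum_sub_distrib, sum_pmass_eq_measureReal_univ (hA.prodMk (hB.prodMk hC)),
          sum_pmass_mul_pmass_div_pmass hA hB hC, sub_self]
    _ ≤ condMutualInfoRV μ A B C := by
        rw [condMutualInfoRV_eq_expVal hA hB hC]
        exact Finset.sum_le_sum fun t _ => sub_mul_div_le_mul_log (pmass_nonneg _ _)
          (pmass_le_pmass_comp T (fun t => (t.1, t.2.2)) t) (pmass_le_pmass_comp T Prod.snd t)
          (pmass_le_pmass_comp T (fun t => t.2.2) t)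

lemma condEntropyRV_prodMk_le (hA : Measurable A) (hB : Measurable B) (hC : Measurable C) :
    condEntropyRV μ A (fun ω => (B ω, C ω)) ≤ condEntropyRV μ A C := by
  rw [← sub_nonneg, ← condMutualInfoRV_eq_condEntropyRV_sub]
  exact condMutualInfoRV_nonneg hA hB hC

end CondMutualInfo

section CondIndep

variable {Ω : Type*} [MeasurableSpace Ω] {μ : Measure Ω} {α α' β γ : Type*}
  {A : Ω → α} {B : Ω → β} {C : Ω → γ}

lemma CondIndepRV.symm (h : CondIndepRV μ A B C) : CondIndepRV μ C B A := by
  intro c b a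
  have hCBA : pmass μ (fun ω => (C ω, B ω, A ω)) (c, b, a)
      = pmass μ (fun ω => (A ω, B ω, C ω)) (a, b, c) :=
    pmass_congr fun ω => by simp only [Prod.mk.injEq]; tauto
  have hCB : pmass μ (fun ω => (C ω, B ω)) (c, b) = pmass μ (fun ω => (B ω, C ω)) (b, c) :=
    pmass_congr fun ω => by simp only [Prod.mk.injEq, and_comm]
  have hBA : pmass μ (fun ω => (B ω, A ω)) (b, a) = pmass μ (fun ω => (A ω, B ω)) (a, b) :=
    pmass_congr fun ω => by simp only [Prod.mk.injEq, and_comm]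
  rw [hCBA, hCB, hBA, h, mul_comm]

variable [IsFiniteMeasure μ]
  [Finite α] [MeasurableSpace α] [MeasurableSingletonClass α]
  [MeasurableSpace β] [MeasurableSingletonClass β]
  [MeasurableSpace γ] [MeasurableSingletonClass γ]

lemma CondIndepRV.comp_left (h : CondIndepRV μ A B C) (hA : Measurable A) (hB : Measurable B)
    (hC : Measurable C) (f : α → α') : CondIndepRV μ (fun ω => f (A ω)) B C := by
  classical
  cases nonempty_fintype α
  intro a' b c
  rw [pmass_comp_prodMk hA (hB.prodMk hC), pmass_comp_prodMk hA hB, Finset.sum_mul,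
    Finset.sum_mul]
  exact Finset.sum_congr rfl fun a _ => h a b c

lemma CondIndepRV.weak_union {β' : Type*} [Finite β'] [MeasurableSpace β']
    [MeasurableSingletonClass β'] {B' : Ω → β'} (h : CondIndepRV μ (fun ω => (A ω, B' ω)) B C)
    (hA : Measurable A) (hB' : Measurable B') (hB : Measurable B) (hC : Measurable C) :
    CondIndepRV μ A (fun ω => (B' ω, B ω)) C := by
  rintro a ⟨b', b⟩ c
  have hjoint : pmass μ (fun ω => (A ω, (B' ω, B ω), C ω)) (a, (b', b), c)
      = pmass μ (fun ω => ((A ω, B' ω), B ω, C ω)) ((a, b'), b, c) :=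
    pmass_congr fun ω => by simp only [Prod.mk.injEq, and_assoc]
  have hleft : pmass μ (fun ω => (A ω, B' ω, B ω)) (a, b', b)
      = pmass μ (fun ω => ((A ω, B' ω), B ω)) ((a, b'), b) :=
    pmass_congr fun ω => by simp only [Prod.mk.injEq, and_assoc]
  have hright : pmass μ (fun ω => ((B' ω, B ω), C ω)) ((b', b), c)
      = pmass μ (fun ω => (B' ω, B ω, C ω)) (b', b, c) :=
    pmass_congr fun ω => by simp only [Prod.mk.injEq, and_assoc]
  have h' := h.comp_left (hA.prodMk hB') hB hC Prod.snd b' b c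
  rw [hjoint, hleft, hright]
  rcases eq_or_ne (pmass μ B b) 0 with hb | hb
  · have hnull : pmass μ (fun ω => (B' ω, B ω)) (b', b) = 0 :=
      ((pmass_le_pmass_comp _ Prod.snd _).trans hb.le).antisymm (pmass_nonneg _ _)
    have hnull' : pmass μ (fun ω => ((A ω, B' ω), B ω)) ((a, b'), b) = 0 :=
      ((pmass_le_pmass_comp _ Prod.snd _).trans hb.le).antisymm (pmass_nonneg _ _)
    rw [hnull, hnull', mul_zero, zero_mul]
  · refine mul_right_cancel₀ hb ?_
    linear_combination pmass μ (fun ω => (B' ω, B ω)) (b', b) * h (a, b') b c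
      - pmass μ (fun ω => ((A ω, B' ω), B ω)) ((a, b'), b) * h'

lemma condIndepRV_of_pmass_eq_mul [Finite γ] (hA : Measurable A) (hB : Measurable B)
    (hC : Measurable C) (f : α → β → ℝ) (g : β → γ → ℝ)
    (hfg : ∀ a b c, pmass μ (fun ω => (A ω, B ω, C ω)) (a, b, c) = f a b * g b c) :
    CondIndepRV μ A B C := by
  cases nonempty_fintype α
  cases nonempty_fintype γ
  have hBC (b : β) (c : γ) : pmass μ (fun ω => (B ω, C ω)) (b, c) = (∑ a, f a b) * g b c := by
    simp only [← sum_pmass_prodMk hA (hB.prodMk hC), hfg, Finset.sum_mul]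
  have hAB (a : α) (b : β) : pmass μ (fun ω => (A ω, B ω)) (a, b) = f a b * ∑ c, g b c := by
    simp only [← sum_pmass_prodMk hC (hA.prodMk hB), Finset.mul_sum, ← hfg]
    exact Finset.sum_congr rfl fun c _ => pmass_congr fun ω => by
      simp only [Prod.mk.injEq]; tauto
  have hB (b : β) : pmass μ B b = (∑ a, f a b) * ∑ c, g b c := by
    simp only [← sum_pmass_prodMk hA hB, hAB, Finset.sum_mul]
  intro a b c
  rw [hfg, hAB, hBC, hB]
  ring

end CondIndep

section CondIndepEntropy

variable {Ω : Type*} [MeasurableSpace Ω] {μ : Measure Ω} [IsFiniteMeasure μ] {α β γ : Type*}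
  [Fintype α] [MeasurableSpace α] [MeasurableSingletonClass α]
  [Fintype β] [MeasurableSpace β] [MeasurableSingletonClass β]
  [Fintype γ] [MeasurableSpace γ] [MeasurableSingletonClass γ]
  {A : Ω → α} {B : Ω → β} {C : Ω → γ}

lemma CondIndepRV.condMutualInfoRV_eq_zero (h : CondIndepRV μ A B C) (hA : Measurable A)
    (hB : Measurable B) (hC : Measurable C) : condMutualInfoRV μ A C B = 0 := by
  rw [condMutualInfoRV_eq_expVal hA hC hB]
  refine Finset.sum_eq_zero fun ⟨a, c, b⟩ _ => ?_
  rcases (pmass_nonneg (μ := μ) (fun ω => (A ω, C ω, B ω)) (a, c, b)).eq_or_lt with h0 | hpos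
  · rw [← h0, zero_mul]
  have hAB : 0 < pmass μ (fun ω => (A ω, B ω)) (a, b) :=
    hpos.trans_le (pmass_le_pmass_comp _ (fun t : α × γ × β => (t.1, t.2.2)) _)
  have hCB : 0 < pmass μ (fun ω => (C ω, B ω)) (c, b) :=
    hpos.trans_le (pmass_le_pmass_comp _ Prod.snd _)
  have hB : 0 < pmass μ B b :=
    hpos.trans_le (pmass_le_pmass_comp _ (fun t : α × γ × β => t.2.2) _)
  have hprod : pmass μ (fun ω => (A ω, C ω, B ω)) (a, c, b) * pmass μ B b
      = pmass μ (fun ω => (A ω, B ω)) (a, b) * pmass μ (fun ω => (C ω, B ω)) (c, b) := by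
    convert h a b c using 2 <;>
      exact pmass_congr fun ω => by simp only [Prod.mk.injEq]; tauto
  have hlog := congrArg Real.log hprod
  rw [Real.log_mul hpos.ne' hB.ne', Real.log_mul hAB.ne' hCB.ne'] at hlog
  linear_combination pmass μ (fun ω => (A ω, C ω, B ω)) (a, c, b) * hlog

lemma CondIndepRV.condEntropyRV_prodMk (h : CondIndepRV μ A B C) (hA : Measurable A)
    (hB : Measurable B) (hC : Measurable C) :
    condEntropyRV μ A (fun ω => (C ω, B ω)) = condEntropyRV μ A B := by
  have hzero := h.condMutualInfoRV_eq_zero hA hB hC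
  rw [condMutualInfoRV_eq_condEntropyRV_sub] at hzero
  exact (sub_eq_zero.1 hzero).symm

end CondIndepEntropy

section IndependentLetters

variable {Ω : Type*} [MeasurableSpace Ω] {μ : Measure Ω} [IsFiniteMeasure μ]
  {ι τ α β γ κ : Type*} [Fintype ι] [Finite τ] [MeasurableSpace τ] [MeasurableSingletonClass τ]

lemma condIndepRV_letter_of_pmass_eq_prod [MeasurableSpace β] [MeasurableSingletonClass β]
    {S : Ω → ι → τ} (hS : Measurable S) (p : ι → τ → ℝ)
    (hlaw : ∀ v, pmass μ S v = ∏ j, p j (v j)) (g : τ → β) (i : ι) :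
    CondIndepRV μ (fun ω => S ω i) (fun ω => g (S ω i)) (fun ω (j : {j // j ≠ i}) => S ω j) := by
  classical
  have hg : Measurable g := .of_discrete
  refine condIndepRV_of_pmass_eq_mul (by fun_prop) (by fun_prop) (by fun_prop)
    (fun a b => if g a = b then p i a else 0) (fun _ c => ∏ j : {j // j ≠ i}, p j (c j))
    fun a b c => ?_
  split_ifs with hab
  · let v (j : ι) : τ := if h : j ≠ i then c ⟨j, h⟩ else a
    have hmass : pmass μ (fun ω => (S ω i, g (S ω i), fun j : {j // j ≠ i} => S ω j)) (a, b, c)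
        = pmass μ S v := pmass_congr fun ω => by
      simp only [Prod.mk.injEq, funext_iff, Subtype.forall, v]
      grind
    have hself : v i = a := by simp [v]
    have hne (j : {j // j ≠ i}) : v j = c j := by simp [v, j.2]
    rw [hmass, hlaw, Fintype.prod_eq_mul_prod_subtype_ne _ i]
    simp only [hself, hne]
  · rw [zero_mul]
    exact pmass_eq_zero_of_forall_ne fun ω h => by grind

lemma condEntropyRV_tail_eq_condEntropyRV_letter [Fintype α] [MeasurableSpace α]
    [MeasurableSingletonClass α] [Fintype β] [MeasurableSpace β] [MeasurableSingletonClass β]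
    {n : ℕ} {S : Ω → Fin n → τ} (hS : Measurable S) (p : Fin n → τ → ℝ)
    (hlaw : ∀ v, pmass μ S v = ∏ j, p j (v j)) (f : τ → α) (g : τ → β) (i : Fin n) :
    condEntropyRV μ (fun ω => f (S ω i))
        (fun ω => ((fun j : {j // i < j} => f (S ω j)), fun j => g (S ω j)))
      = condEntropyRV μ (fun ω => f (S ω i)) (fun ω => g (S ω i)) := by
  have hf : Measurable f := .of_discrete
  have hg : Measurable g := .of_discrete
  have hindep : CondIndepRV μ (fun ω => f (S ω i)) (fun ω => g (S ω i))
      (fun ω => ((fun j : {j // i < j} => f (S ω j)), fun j : {j // j ≠ i} => g (S ω j))) :=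
    (((condIndepRV_letter_of_pmass_eq_prod hS p hlaw g i).comp_left (by fun_prop) (by fun_prop)
      (by fun_prop) f).symm.comp_left (by fun_prop) (by fun_prop) (by fun_prop)
      fun c => ((fun j : {j // i < j} => f (c ⟨j, j.2.ne'⟩)), fun j => g (c j))).symm
  rw [← hindep.condEntropyRV_prodMk (by fun_prop) (by fun_prop) (by fun_prop)]
  refine condEntropyRV_congr_right _ fun ω ω' => ?_
  simp only [Prod.mk.injEq, funext_iff, Subtype.forall]
  grind

variable [Finite α] [MeasurableSpace α] [MeasurableSingletonClass α]
  [Finite β] [MeasurableSpace β] [MeasurableSingletonClass β]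
  [Finite γ] [MeasurableSpace γ] [MeasurableSingletonClass γ]
  [Finite κ] [MeasurableSpace κ] [MeasurableSingletonClass κ]
  {A : Ω → ι → α} {B : Ω → ι → β} {C : Ω → ι → γ} {K : Ω → κ}

lemma condIndepRV_block_of_pmass_eq_prod (hA : Measurable A) (hB : Measurable B)
    (hC : Measurable C) (hK : Measurable K) (p : ι → α → β → ℝ) (q : ι → β → γ → ℝ)
    (hlaw : ∀ a b c, pmass μ (fun ω => (A ω, B ω, C ω)) (a, b, c)
      = ∏ j, p j (a j) (b j) * q j (b j) (c j))
    (hKindep : IndepRV μ K fun ω => (A ω, B ω, C ω)) (s : ι → Prop) :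
    CondIndepRV μ (fun ω => (K ω, A ω, fun j : {j // ¬s j} => (B ω j, C ω j)))
      (fun ω (j : {j // s j}) => B ω j) (fun ω (j : {j // s j}) => C ω j) := by
  classical
  refine condIndepRV_of_pmass_eq_mul (by fun_prop) (by fun_prop) (by fun_prop)
    (fun t b => pmass μ K t.1
      * (∏ j : {j // ¬s j}, p j (t.2.1 j) (t.2.2 j).1 * q j (t.2.2 j).1 (t.2.2 j).2)
      * ∏ j : {j // s j}, p j (t.2.1 j) (b j))
    (fun b c => ∏ j : {j // s j}, q j (b j) (c j)) ?_
  rintro ⟨k, a, d⟩ b c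
  let b' (j : ι) : β := if h : s j then b ⟨j, h⟩ else (d ⟨j, h⟩).1
  let c' (j : ι) : γ := if h : s j then c ⟨j, h⟩ else (d ⟨j, h⟩).2
  have hmass : pmass μ (fun ω => ((K ω, A ω, fun j : {j // ¬s j} => (B ω j, C ω j)),
      (fun j : {j // s j} => B ω j), fun j : {j // s j} => C ω j)) ((k, a, d), b, c)
      = pmass μ (fun ω => (K ω, A ω, B ω, C ω)) (k, a, b', c') := pmass_congr fun ω => by
    simp only [Prod.mk.injEq, funext_iff, Subtype.forall, b', c']
    grind
  have hmem (j : {j // s j}) : b' j = b j ∧ c' j = c j := by simp [b', c', j.2]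
  have hnot (j : {j // ¬s j}) : b' j = (d j).1 ∧ c' j = (d j).2 := by simp [b', c', j.2]
  rw [hmass, hKindep, hlaw, ← Fintype.prod_subtype_mul_prod_subtype s]
  simp only [hmem, hnot, Finset.prod_mul_distrib]
  ring

end IndependentLetters

section Converse

variable {Ω 𝒳 𝒳t 𝒴 𝒵 𝒲 𝒦 : Type*} [MeasurableSpace Ω] {μ : Measure Ω} [IsFiniteMeasure μ]
  [MeasurableSpace 𝒳] [MeasurableSingletonClass 𝒳]
  [Finite 𝒳t] [MeasurableSpace 𝒳t] [MeasurableSingletonClass 𝒳t]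
  [MeasurableSpace 𝒴] [MeasurableSingletonClass 𝒴]
  [MeasurableSpace 𝒵] [MeasurableSingletonClass 𝒵]
  [MeasurableSpace 𝒲] [MeasurableSingletonClass 𝒲]
  [Finite 𝒦] [MeasurableSpace 𝒦] [MeasurableSingletonClass 𝒦]
  {n : ℕ} {Xt : Ω → Fin n → 𝒳t} {X : Ω → Fin n → 𝒳} {Y : Ω → Fin n → 𝒴} {Z : Ω → Fin n → 𝒵}
  {W : Ω → 𝒲} {K : Ω → 𝒦}

lemma condIndepRV_letter_message_future [Finite 𝒳] [Finite 𝒴] [Finite 𝒵] [Finite 𝒲]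
    (hXt : Measurable Xt) (hX : Measurable X) (hY : Measurable Y) (hZ : Measurable Z)
    (hK : Measurable K) (p : Fin n → 𝒳 → 𝒳t → ℝ) (q : Fin n → 𝒳 → 𝒴 × 𝒵 → ℝ)
    (hlaw : ∀ v, pmass μ (fun ω j => (Xt ω j, X ω j, Y ω j, Z ω j)) v
      = ∏ j, p j (v j).2.1 (v j).1 * q j (v j).2.1 (v j).2.2)
    (hKindep : IndepRV μ K fun ω j => (Xt ω j, X ω j, Y ω j, Z ω j))
    (enc : (Fin n → 𝒳t) → 𝒦 → 𝒲) (i : Fin n) :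
    CondIndepRV μ (fun ω => X ω i)
      (fun ω => ((enc (Xt ω) (K ω), fun j : {j // ¬i < j} => Z ω j),
        fun j : {j // i < j} => (X ω j, Z ω j)))
      (fun ω (j : {j // i < j}) => Y ω j) := by
  have hmass (a b c) : pmass μ (fun ω => (Xt ω, (fun j => (X ω j, Z ω j)), Y ω)) (a, b, c)
      = pmass μ (fun ω j => (Xt ω j, X ω j, Y ω j, Z ω j))
          (fun j => (a j, (b j).1, c j, (b j).2)) :=
    pmass_congr fun ω => by
      simp only [Prod.mk.injEq, funext_iff]
      grind
  have hKmass (k a b c) :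
      pmass μ (fun ω => (K ω, Xt ω, (fun j => (X ω j, Z ω j)), Y ω)) (k, a, b, c)
      = pmass μ (fun ω => (K ω, fun j => (Xt ω j, X ω j, Y ω j, Z ω j)))
          (k, fun j => (a j, (b j).1, c j, (b j).2)) :=
    pmass_congr fun ω => by
      simp only [Prod.mk.injEq, funext_iff]
      grind
  have hblock := condIndepRV_block_of_pmass_eq_prod (B := fun ω j => (X ω j, Z ω j)) hXt
    (by fun_prop) hY hK (fun j a b => p j b.1 a) (fun j b c => q j b.1 (c, b.2))
    (fun a b c => by rw [hmass, hlaw]) (fun k ⟨a, b, c⟩ => by rw [hKmass, hKindep, hmass]) (i < ·)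
  have henc : Measurable (Function.uncurry enc) := .of_discrete
  have hW : Measurable fun ω => enc (Xt ω) (K ω) := henc.comp (hXt.prodMk hK)
  exact (hblock.comp_left (by fun_prop) (by fun_prop) (by fun_prop) fun t =>
    ((t.2.2 ⟨i, lt_irrefl i⟩).1.1, enc t.2.1 t.1, fun j => (t.2.2 j).1.2)).weak_union
    (by fun_prop) (hW.prodMk (by fun_prop)) (by fun_prop) (by fun_prop)

variable [Fintype 𝒳] [Fintype 𝒴] [Fintype 𝒵] [Fintype 𝒲]

lemma CondIndepRV.condEntropyRV_tail_le {i : Fin n}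
    (h : CondIndepRV μ (fun ω => X ω i)
      (fun ω => ((W ω, fun j : {j // ¬i < j} => Z ω j), fun j : {j // i < j} => (X ω j, Z ω j)))
      (fun ω (j : {j // i < j}) => Y ω j))
    (hX : Measurable X) (hY : Measurable Y) (hZ : Measurable Z) (hW : Measurable W) :
    condEntropyRV μ (fun ω => X ω i) (fun ω => ((fun j : {j // i < j} => X ω j), W ω, Z ω))
      ≤ condEntropyRV μ (fun ω => X ω i)
        (fun ω => ((W ω, (fun j : {j // i < j} => Y ω j),
          fun j : {j : Fin n // j.1 < i} => Z ω j), Z ω i)) :=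
  calc
    _ = condEntropyRV μ (fun ω => X ω i) (fun ω =>
          ((W ω, fun j : {j // ¬i < j} => Z ω j), fun j : {j // i < j} => (X ω j, Z ω j))) := by
        refine condEntropyRV_congr_right _ fun ω ω' => ?_
        simp only [Prod.mk.injEq, funext_iff, Subtype.forall]
        grind
    _ = condEntropyRV μ (fun ω => X ω i) (fun ω => ((fun j : {j // i < j} => Y ω j),
          (W ω, fun j : {j // ¬i < j} => Z ω j), fun j : {j // i < j} => (X ω j, Z ω j))) :=
        (h.condEntropyRV_prodMk (by fun_prop) (by fun_prop) (by fun_prop)).symm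
    _ = condEntropyRV μ (fun ω => X ω i) (fun ω => ((fun j : {j // i < j} => (X ω j, Z ω j)),
          (W ω, (fun j : {j // i < j} => Y ω j),
            fun j : {j : Fin n // j.1 < i} => Z ω j), Z ω i)) := by
        refine condEntropyRV_congr_right _ fun ω ω' => ?_
        simp only [Prod.mk.injEq, funext_iff, Subtype.forall]
        grind
    _ ≤ _ := condEntropyRV_prodMk_le (by fun_prop) (by fun_prop) (by fun_prop)

/-- Here `p j x x̃` plays the role of `P_X(x) P_{X̃|X}(x̃|x)` and `q j x (y, z)` that of
`P_{YZ|X}(y, z|x)` for the `j`-th letter. -/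
theorem privacy_leakage_converse_middle_key_general (hXt : Measurable Xt) (hX : Measurable X)
    (hY : Measurable Y) (hZ : Measurable Z) (hK : Measurable K) (p : Fin n → 𝒳 → 𝒳t → ℝ)
    (q : Fin n → 𝒳 → 𝒴 × 𝒵 → ℝ)
    (hlaw : ∀ v, pmass μ (fun ω j => (Xt ω j, X ω j, Y ω j, Z ω j)) v
      = ∏ j, p j (v j).2.1 (v j).1 * q j (v j).2.1 (v j).2.2)
    (hKindep : IndepRV μ K fun ω j => (Xt ω j, X ω j, Y ω j, Z ω j))
    (enc : (Fin n → 𝒳t) → 𝒦 → 𝒲) :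
    condMutualInfoRV μ X (fun ω => enc (Xt ω) (K ω)) Z
      ≥ ∑ i : Fin n, condMutualInfoRV μ
          (fun ω => (enc (Xt ω) (K ω), (fun j : {j : Fin n // i < j} => Y ω j),
            fun j : {j : Fin n // j.1 < i} => Z ω j))
          (fun ω => X ω i) (fun ω => Z ω i) := by
  have henc : Measurable (Function.uncurry enc) := .of_discrete
  have hW : Measurable fun ω => enc (Xt ω) (K ω) := henc.comp (hXt.prodMk hK)
  have hS : Measurable fun ω j => (Xt ω j, X ω j, Y ω j, Z ω j) := by fun_prop
  rw [ge_iff_le, condMutualInfoRV_eq_condEntropyRV_sub, condEntropyRV_pi_eq_sum X Z,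
    condEntropyRV_pi_eq_sum X (fun ω => (enc (Xt ω) (K ω), Z ω)), ← Finset.sum_sub_distrib]
  refine Finset.sum_le_sum fun i _ => ?_
  have hfree := condEntropyRV_tail_eq_condEntropyRV_letter hS
    (fun j t => p j t.2.1 t.1 * q j t.2.1 t.2.2) hlaw (fun t => t.2.1) (fun t => t.2.2.2) i
  have hmarkov := condIndepRV_letter_message_future hXt hX hY hZ hK p q hlaw hKindep enc i
  rw [condMutualInfoRV_comm, condMutualInfoRV_eq_condEntropyRV_sub, hfree]
  exact sub_le_sub_left (hmarkov.condEntropyRV_tail_le hX hY hZ hW) _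

end Converse

/-- **Privacy-leakage converse bound (middle/large key regime)**: under the converse
setup, `I(Xⁿ; W | Zⁿ) ≥ ∑ᵢ I(Vᵢ; Xᵢ | Zᵢ)`. -/
theorem privacy_leakage_converse_middle_key
    {𝒳 𝒳t 𝒴 𝒵 𝒲 𝒦 : Type}
    [Fintype 𝒳] [Fintype 𝒳t] [Fintype 𝒴] [Fintype 𝒵] [Fintype 𝒲] [Fintype 𝒦]
    [MeasurableSpace 𝒳] [DiscreteMeasurableSpace 𝒳]
    [MeasurableSpace 𝒳t] [DiscreteMeasurableSpace 𝒳t]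
    [MeasurableSpace 𝒴] [DiscreteMeasurableSpace 𝒴]
    [MeasurableSpace 𝒵] [DiscreteMeasurableSpace 𝒵]
    [MeasurableSpace 𝒲] [DiscreteMeasurableSpace 𝒲]
    [MeasurableSpace 𝒦] [DiscreteMeasurableSpace 𝒦]
    {Ω : Type} [MeasurableSpace Ω] (μ : MeasureTheory.Measure Ω)
    [MeasureTheory.IsProbabilityMeasure μ]
    {n : ℕ} (S : Ω → Fin n → 𝒳t × 𝒳 × 𝒴 × 𝒵) (K : Ω → 𝒦)
    (hSmeas : Measurable S) (hKmeas : Measurable K)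
    (pX : 𝒳 → ℝ) (pXt : 𝒳 → 𝒳t → ℝ) (pYZ : 𝒳 → 𝒴 × 𝒵 → ℝ)
    (hpX0 : ∀ x, 0 ≤ pX x) (hpX1 : ∑ x, pX x = 1)
    (hpXt0 : ∀ x a, 0 ≤ pXt x a) (hpXt1 : ∀ x, ∑ a, pXt x a = 1)
    (hpYZ0 : ∀ x yz, 0 ≤ pYZ x yz) (hpYZ1 : ∀ x, ∑ yz, pYZ x yz = 1)
    (hiid : HasIIDLaw μ S (fun s => pX s.2.1 * pXt s.2.1 s.1 * pYZ s.2.1 s.2.2))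
    (hKunif : UniformRV μ K) (hKind : IndepRV μ K S)
    (enc : (Fin n → 𝒳t) → 𝒦 → 𝒲)
    :
    condMutualInfoRV μ (fun ω => fun j => (S ω j).2.1)
      (fun ω => enc (fun j => (S ω j).1) (K ω))
      (fun ω => fun j => (S ω j).2.2.2)
    ≥ ∑ i : Fin n,
        condMutualInfoRV μ
          (fun ω => (enc (fun j => (S ω j).1) (K ω),
          (fun j : {j : Fin n // i < j} => (S ω j.1).2.2.1),
          (fun j : {j : Fin n // j.1 < i} => (S ω j.1).2.2.2)))
          (fun ω => (S ω i).2.1) (fun ω => (S ω i).2.2.2) := by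
  exact privacy_leakage_converse_middle_key_general (by fun_prop) (by fun_prop) (by fun_prop)
    (by fun_prop) hKmeas (fun _ x a => pX x * pXt x a) (fun _ => pYZ) hiid hKind enc
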